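/- Fix λ0 ∈ ℝ and let g be an exchangeable prior with 0 < ∫ τ′τ g(dτ) < ∞. For any design d and any generalized inverse G of A_{d22}, one has ∫ τ′ A_d(G) τ g(dτ) = (∫ τ′τ g(dτ)) · tr(A_d(G))/(t−1); in particular this value is independent of the choice of G. Moreover, d maximizes φ_{g,λ0}(d′) = ∫ τ′ A_{d′}(G′) τ g(dτ) over all designs d′ (and all generalized inverses G′ of A_{d′22}) if and only if tr(A_d(G)) = n y_0. -/

import Mathlib

open Matrix MeasureTheory
open scoped Classical

noncomputable section

/-- A treatment sequence: assigns a treatment in `Fin t` to each period in `Fin p`. -/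
abbrev TrtSeq (p t : ℕ) := Fin p → Fin t

/-- Treatment/period incidence matrix `T_s`. -/
def Tmat {p t : ℕ} (s : TrtSeq p t) : Matrix (Fin p) (Fin t) ℝ :=
  Matrix.of fun k i => if s k = i then 1 else 0

/-- Carryover incidence matrix `F_s`: first row zero, row `k` records the treatment
in period `k-1`. -/
def Fmat {p t : ℕ} (s : TrtSeq p t) : Matrix (Fin p) (Fin t) ℝ :=
  Matrix.of fun k i =>
    if (k : ℕ) = 0 then 0
    else if s ⟨(k : ℕ) - 1, Nat.lt_of_le_of_lt (Nat.sub_le _ _) k.isLt⟩ = i then 1 else 0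

/-- The all-ones `m × m` matrix `J_m`. -/
def Jmat (m : ℕ) : Matrix (Fin m) (Fin m) ℝ := Matrix.of fun _ _ => 1

/-- `B_t = I_t - J_t / t`. -/
def Bmat (t : ℕ) : Matrix (Fin t) (Fin t) ℝ := 1 - ((t : ℝ))⁻¹ • Jmat t

/-- `B̃ = Σ⁻¹ - Σ⁻¹ J_p Σ⁻¹ / (1_p' Σ⁻¹ 1_p)`. -/
def Btil {p : ℕ} (S : Matrix (Fin p) (Fin p) ℝ) : Matrix (Fin p) (Fin p) ℝ :=
  S⁻¹ - (((fun _ => (1 : ℝ)) : Fin p → ℝ) ⬝ᵥ (S⁻¹ *ᵥ fun _ => (1 : ℝ)))⁻¹ •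
    (S⁻¹ * Jmat p * S⁻¹)

/-- `G_1(s) = T_s`, `G_2(s) = F_s`. -/
def Gmat {p t : ℕ} (i : Fin 2) (s : TrtSeq p t) : Matrix (Fin p) (Fin t) ℝ :=
  if i = 0 then Tmat s else Fmat s

/-- An approximate design: nonnegative weights summing to one. -/
def IsDesign {p t : ℕ} (w : TrtSeq p t → ℝ) : Prop :=
  (∀ s, 0 ≤ w s) ∧ ∑ s : TrtSeq p t, w s = 1

/-- `Ĉ_{sij} = B_t G_i(s)' B̃ G_j(s) B_t`. -/
def Chat {p t : ℕ} (S : Matrix (Fin p) (Fin p) ℝ) (s : TrtSeq p t) (i j : Fin 2) :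
    Matrix (Fin t) (Fin t) ℝ :=
  Bmat t * (Gmat i s)ᵀ * Btil S * Gmat j s * Bmat t

/-- `c_{sij} = tr Ĉ_{sij}`. -/
def cseq {p t : ℕ} (S : Matrix (Fin p) (Fin p) ℝ) (s : TrtSeq p t) (i j : Fin 2) : ℝ :=
  (Chat S s i j).trace

/-- `Ĉ_{dij} = n ∑_s p_s Ĉ_{sij}`. -/
def ChatD {p t : ℕ} (n : ℕ) (S : Matrix (Fin p) (Fin p) ℝ) (w : TrtSeq p t → ℝ)
    (i j : Fin 2) : Matrix (Fin t) (Fin t) ℝ :=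
  (n : ℝ) • ∑ s : TrtSeq p t, w s • Chat S s i j

/-- `C_{dij} = Ĉ_{dij} - n (∑_s p_s G_i(s) B_t)' B̃ (∑_s p_s G_j(s) B_t)`. -/
def CD {p t : ℕ} (n : ℕ) (S : Matrix (Fin p) (Fin p) ℝ) (w : TrtSeq p t → ℝ)
    (i j : Fin 2) : Matrix (Fin t) (Fin t) ℝ :=
  ChatD n S w i j -
    (n : ℝ) • ((∑ s : TrtSeq p t, w s • (Gmat i s * Bmat t))ᵀ * Btil S *
      (∑ s : TrtSeq p t, w s • (Gmat j s * Bmat t)))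

/-- `c_{dij} = tr Ĉ_{dij} = n ∑_s p_s c_{sij}`. -/
def cD {p t : ℕ} (n : ℕ) (S : Matrix (Fin p) (Fin p) ℝ) (w : TrtSeq p t → ℝ)
    (i j : Fin 2) : ℝ :=
  (ChatD n S w i j).trace

/-- Fisher information matrix `C_{d,τ0,λ0}` for the direct treatment effects under the
proportional model. -/
def CInfo {p t : ℕ} (n : ℕ) (S : Matrix (Fin p) (Fin p) ℝ) (w : TrtSeq p t → ℝ)
    (τ0 : Fin t → ℝ) (l0 : ℝ) : Matrix (Fin t) (Fin t) ℝ :=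
  CD n S w 0 0 + l0 • (CD n S w 0 1 + CD n S w 1 0) + (l0 ^ 2) • CD n S w 1 1 -
    (τ0 ⬝ᵥ (CD n S w 1 1 *ᵥ τ0))⁻¹ •
      ((CD n S w 0 1 + l0 • CD n S w 1 1) * vecMulVec τ0 τ0 *
        (CD n S w 1 0 + l0 • CD n S w 1 1))

/-- Permutation matrix `S_σ` with `(S_σ)_{j,i} = 1` iff `i = σ j`. -/
def Smat {t : ℕ} (σ : Equiv.Perm (Fin t)) : Matrix (Fin t) (Fin t) ℝ :=
  Matrix.of fun j i => if i = σ j then 1 else 0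

/-- The relabelled sequence `σ ∘ s`. -/
def permSeq {p t : ℕ} (σ : Equiv.Perm (Fin t)) (s : TrtSeq p t) : TrtSeq p t := fun k => σ (s k)

/-- The design `σ d`, with weights `(σd)_s = p_{σ⁻¹ ∘ s}`. -/
def permDesign {p t : ℕ} (σ : Equiv.Perm (Fin t)) (w : TrtSeq p t → ℝ) : TrtSeq p t → ℝ :=
  fun s => w (permSeq σ⁻¹ s)

/-- A design is symmetric if its weights are invariant under treatment relabelling. -/
def IsSymmetricDesign {p t : ℕ} (w : TrtSeq p t → ℝ) : Prop :=
  ∀ (σ : Equiv.Perm (Fin t)) (s : TrtSeq p t), w (permSeq σ s) = w s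

/-- The symmetrized design `d*` with weights `p*_s = (1/t!) ∑_σ p_{σ⁻¹ ∘ s}`. -/
def symmetrize {p t : ℕ} (w : TrtSeq p t → ℝ) : TrtSeq p t → ℝ :=
  fun s => ((Nat.factorial t : ℝ))⁻¹ * ∑ σ : Equiv.Perm (Fin t), permDesign σ w s

/-- `q_s(x) = c_{s11} + 2 c_{s12} x + c_{s22} x²`. -/
def qSeq {p t : ℕ} (S : Matrix (Fin p) (Fin p) ℝ) (s : TrtSeq p t) (x : ℝ) : ℝ :=
  cseq S s 0 0 + 2 * cseq S s 0 1 * x + cseq S s 1 1 * x ^ 2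

/-- `q(x) = max_{s ∈ S} q_s(x)`. -/
def qMax (p t : ℕ) (S : Matrix (Fin p) (Fin p) ℝ) (x : ℝ) : ℝ :=
  sSup (Set.range fun s : TrtSeq p t => qSeq S s x)

/-- `y* = inf_x q(x)`. -/
def yStar (p t : ℕ) (S : Matrix (Fin p) (Fin p) ℝ) : ℝ := ⨅ x : ℝ, qMax p t S x

/-- `q_d(x) = ∑_s p_s q_s(x)`. -/
def qD {p t : ℕ} (S : Matrix (Fin p) (Fin p) ℝ) (w : TrtSeq p t → ℝ) (x : ℝ) : ℝ :=
  ∑ s : TrtSeq p t, w s * qSeq S s x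

/-- `x_d = -c_{d12}/c_{d22}`. -/
def xD {p t : ℕ} (n : ℕ) (S : Matrix (Fin p) (Fin p) ℝ) (w : TrtSeq p t → ℝ) : ℝ :=
  -(cD n S w 0 1) / cD n S w 1 1

/-- An exchangeable prior: a probability measure on `{τ : 1'τ = 0, τ ≠ 0}` that is
invariant under all coordinate permutations of `ℝ^t`. -/
def IsExchangeablePrior {t : ℕ} (g : Measure (Fin t → ℝ)) : Prop :=
  IsProbabilityMeasure g ∧
    g {τ : Fin t → ℝ | ¬((∑ i, τ i) = 0 ∧ τ ≠ 0)} = 0 ∧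
    ∀ σ : Equiv.Perm (Fin t), Measure.map (fun τ i => τ (σ i)) g = g

/-- `m_d(τ0) = min {ℓ' C_{d,τ0,λ0} ℓ : 1'ℓ = 0, ℓ'ℓ = 1}`. -/
def mD {p t : ℕ} (n : ℕ) (S : Matrix (Fin p) (Fin p) ℝ) (w : TrtSeq p t → ℝ) (l0 : ℝ)
    (τ0 : Fin t → ℝ) : ℝ :=
  sInf {v : ℝ | ∃ l : Fin t → ℝ, (∑ i, l i) = 0 ∧ l ⬝ᵥ l = 1 ∧
    v = l ⬝ᵥ (CInfo n S w τ0 l0 *ᵥ l)}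

/-- The E-criterion value `E_{g,λ0}(d) = ∫ m_d(τ0) g(dτ0)`. -/
def Ecrit {p t : ℕ} (n : ℕ) (S : Matrix (Fin p) (Fin p) ℝ) (g : Measure (Fin t → ℝ))
    (l0 : ℝ) (w : TrtSeq p t → ℝ) : ℝ :=
  ∫ τ0, mD n S w l0 τ0 ∂g

/-- Competing designs for E-optimality: designs with a.e. positive `τ0' C_{d22} τ0`
and `g`-integrable `m_d`. -/
def EAdmissible {p t : ℕ} (n : ℕ) (S : Matrix (Fin p) (Fin p) ℝ) (g : Measure (Fin t → ℝ))
    (l0 : ℝ) (w : TrtSeq p t → ℝ) : Prop :=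
  IsDesign w ∧ (∀ᵐ τ0 ∂g, 0 < τ0 ⬝ᵥ (CD n S w 1 1 *ᵥ τ0)) ∧
    Integrable (mD n S w l0) g

/-- `d` is `E_{g,λ0}`-optimal. -/
def EOptimal {p t : ℕ} (n : ℕ) (S : Matrix (Fin p) (Fin p) ℝ) (g : Measure (Fin t → ℝ))
    (l0 : ℝ) (w : TrtSeq p t → ℝ) : Prop :=
  ∀ w' : TrtSeq p t → ℝ, EAdmissible n S g l0 w' → Ecrit n S g l0 w' ≤ Ecrit n S g l0 w

/-- A pseudo symmetric design: treatments equireplicated in each period,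
and all `C_{dij}` completely symmetric. -/
def IsPseudoSymmetric {p t : ℕ} (n : ℕ) (S : Matrix (Fin p) (Fin p) ℝ)
    (w : TrtSeq p t → ℝ) : Prop :=
  (∀ (k : Fin p) (i : Fin t),
    (∑ s ∈ Finset.univ.filter fun s : TrtSeq p t => s k = i, w s) = 1 / (t : ℝ)) ∧
  ∀ i j : Fin 2, ∃ a b : ℝ, CD n S w i j = a • (1 : Matrix (Fin t) (Fin t) ℝ) + b • Jmat t

/-- Eigenvalues of a (Hermitian) matrix sorted increasingly with multiplicity. -/
def sortedEigs {t : ℕ} (C : Matrix (Fin t) (Fin t) ℝ) : Fin t → ℝ :=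
  if h : C.IsHermitian then (fun i => h.eigenvalues (Tuple.sort h.eigenvalues i))
  else fun _ => 0

/-- `Φ_D(C) = (∏_{i=1}^{t-1} a_i)^{1/(t-1)}` (eigenvalues sorted increasingly). -/
def PhiD {t : ℕ} (C : Matrix (Fin t) (Fin t) ℝ) : ℝ :=
  (∏ i ∈ Finset.univ.filter fun i : Fin t => (i : ℕ) ≠ 0, sortedEigs C i) ^ (((t : ℝ) - 1)⁻¹)

/-- `Φ_A(C) = (t-1)(∑_{i=1}^{t-1} a_i⁻¹)⁻¹` if `a_1 > 0`, else `0`. -/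
def PhiA {t : ℕ} (C : Matrix (Fin t) (Fin t) ℝ) : ℝ :=
  if ∀ i : Fin t, (i : ℕ) ≠ 0 → 0 < sortedEigs C i then
    ((t : ℝ) - 1) *
      (∑ i ∈ Finset.univ.filter fun i : Fin t => (i : ℕ) ≠ 0, (sortedEigs C i)⁻¹)⁻¹
  else 0

/-- `Φ_T(C) = tr(C)/(t-1)`. -/
def PhiT {t : ℕ} (C : Matrix (Fin t) (Fin t) ℝ) : ℝ := C.trace / ((t : ℝ) - 1)

/-- The criterion value `∫ Φ(C_{d,τ0,λ0}) g(dτ0)`. -/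
def PhiCrit {p t : ℕ} (n : ℕ) (S : Matrix (Fin p) (Fin p) ℝ)
    (Phi : Matrix (Fin t) (Fin t) ℝ → ℝ) (g : Measure (Fin t → ℝ)) (l0 : ℝ)
    (w : TrtSeq p t → ℝ) : ℝ :=
  ∫ τ0, Phi (CInfo n S w τ0 l0) ∂g

/-- Competing designs for a `Φ`-criterion. -/
def PhiAdmissible {p t : ℕ} (n : ℕ) (S : Matrix (Fin p) (Fin p) ℝ)
    (Phi : Matrix (Fin t) (Fin t) ℝ → ℝ) (g : Measure (Fin t → ℝ)) (l0 : ℝ)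
    (w : TrtSeq p t → ℝ) : Prop :=
  IsDesign w ∧ (∀ᵐ τ0 ∂g, 0 < τ0 ⬝ᵥ (CD n S w 1 1 *ᵥ τ0)) ∧
    Integrable (fun τ0 => Phi (CInfo n S w τ0 l0)) g

/-- `d` is `Φ_{g,λ0}`-optimal. -/
def PhiOptimal {p t : ℕ} (n : ℕ) (S : Matrix (Fin p) (Fin p) ℝ)
    (Phi : Matrix (Fin t) (Fin t) ℝ → ℝ) (g : Measure (Fin t → ℝ)) (l0 : ℝ)
    (w : TrtSeq p t → ℝ) : Prop :=
  ∀ w' : TrtSeq p t → ℝ, PhiAdmissible n S Phi g l0 w' →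
    PhiCrit n S Phi g l0 w' ≤ PhiCrit n S Phi g l0 w

/-- `H_1(s) = F_s`, `H_2(s) = T_s + λ0 F_s` (for estimating `λ`). -/
def Hmat {p t : ℕ} (l0 : ℝ) (i : Fin 2) (s : TrtSeq p t) : Matrix (Fin p) (Fin t) ℝ :=
  if i = 0 then Fmat s else Tmat s + l0 • Fmat s

/-- `Â_{sij} = B_t H_i(s)' B̃ H_j(s) B_t`. -/
def Ahat {p t : ℕ} (S : Matrix (Fin p) (Fin p) ℝ) (l0 : ℝ) (s : TrtSeq p t) (i j : Fin 2) :
    Matrix (Fin t) (Fin t) ℝ :=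
  Bmat t * (Hmat l0 i s)ᵀ * Btil S * Hmat l0 j s * Bmat t

/-- `h_{sij} = tr Â_{sij}`. -/
def hseq {p t : ℕ} (S : Matrix (Fin p) (Fin p) ℝ) (l0 : ℝ) (s : TrtSeq p t) (i j : Fin 2) : ℝ :=
  (Ahat S l0 s i j).trace

/-- `Â_{dij} = n ∑_s p_s Â_{sij}`. -/
def AhatD {p t : ℕ} (n : ℕ) (S : Matrix (Fin p) (Fin p) ℝ) (l0 : ℝ) (w : TrtSeq p t → ℝ)
    (i j : Fin 2) : Matrix (Fin t) (Fin t) ℝ :=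
  (n : ℝ) • ∑ s : TrtSeq p t, w s • Ahat S l0 s i j

/-- `A_{dij} = Â_{dij} - n (∑_s p_s H_i(s) B_t)' B̃ (∑_s p_s H_j(s) B_t)`. -/
def AD {p t : ℕ} (n : ℕ) (S : Matrix (Fin p) (Fin p) ℝ) (l0 : ℝ) (w : TrtSeq p t → ℝ)
    (i j : Fin 2) : Matrix (Fin t) (Fin t) ℝ :=
  AhatD n S l0 w i j -
    (n : ℝ) • ((∑ s : TrtSeq p t, w s • (Hmat l0 i s * Bmat t))ᵀ * Btil S *
      (∑ s : TrtSeq p t, w s • (Hmat l0 j s * Bmat t)))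

/-- `G` is a generalized inverse of `A`. -/
def IsGInv {t : ℕ} (A G : Matrix (Fin t) (Fin t) ℝ) : Prop := A * G * A = A

/-- `A_d(G) = A_{d11} - A_{d12} G A_{d21}` with `A_{d21} = A_{d12}'`. -/
def ADfun {p t : ℕ} (n : ℕ) (S : Matrix (Fin p) (Fin p) ℝ) (l0 : ℝ) (w : TrtSeq p t → ℝ)
    (G : Matrix (Fin t) (Fin t) ℝ) : Matrix (Fin t) (Fin t) ℝ :=
  AD n S l0 w 0 0 - AD n S l0 w 0 1 * G * (AD n S l0 w 0 1)ᵀ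

/-- `r_s(x) = h_{s11} + 2 h_{s12} x + h_{s22} x²`. -/
def rSeq {p t : ℕ} (S : Matrix (Fin p) (Fin p) ℝ) (l0 : ℝ) (s : TrtSeq p t) (x : ℝ) : ℝ :=
  hseq S l0 s 0 0 + 2 * hseq S l0 s 0 1 * x + hseq S l0 s 1 1 * x ^ 2

/-- `r(x) = max_s r_s(x)`. -/
def rMax (p t : ℕ) (S : Matrix (Fin p) (Fin p) ℝ) (l0 : ℝ) (x : ℝ) : ℝ :=
  sSup (Set.range fun s : TrtSeq p t => rSeq S l0 s x)

/-- `y_0 = inf_x r(x)`. -/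
def yZero (p t : ℕ) (S : Matrix (Fin p) (Fin p) ℝ) (l0 : ℝ) : ℝ := ⨅ x : ℝ, rMax p t S l0 x

/-!
The blocks `A_{dij}` form a covariance, hence are Gram blocks `Yᵢᴴ Yⱼ`, and `A_d(G)` is the Gram
matrix of the residual of `Y₀` after orthogonal projection onto the column space of `Y₁`. It
therefore does not depend on `G`, and it is dominated by the Gram matrix of `Y₀ + x Y₁` for every
`x`; taking traces gives `tr A_d(G) ≤ n ∑ p_s r_s(x) ≤ n r(x)`, hence `tr A_d(G) ≤ n y_0`.

The bound is attained. The `r_s` are convex, so the minimax theorem provides weights with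
`∑ p_s r_s ≥ y_0` everywhere. Averaging these over relabellings of the treatments keeps
`∑ p_s r_s`, makes the mean incidence matrices vanish and turns the blocks `A_{dij}` into
multiples of `B_t`, for which `tr A_d(G)` is a value of the quadratic `n ∑ p_s r_s`.

By exchangeability `∫ τ τ' dg` is also a multiple of `B_t`, so integrating `τ' A_d(G) τ` amounts to
taking the trace of `A_d(G)` up to a positive constant.
-/

section GeneralizedInverse

variable {m k l R : Type*} [Fintype k] [Ring R] [StarRing R]

/-- The hat matrix `Y G Yᴴ`: when `G` is a generalized inverse of `Yᴴ Y`, the orthogonal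
projection onto the column space of `Y`. -/
def hatMatrix (Y : Matrix m k R) (G : Matrix k k R) : Matrix m m R := Y * G * Yᴴ

variable {Y : Matrix m k R} {G G' : Matrix k k R}

lemma conjTranspose_hatMatrix : (hatMatrix Y G)ᴴ = hatMatrix Y Gᴴ := by
  simp only [hatMatrix, conjTranspose_mul, conjTranspose_conjTranspose, Matrix.mul_assoc]

variable [Fintype m]

lemma gram_mul_conjTranspose_mul_gram (h : Yᴴ * Y * G * (Yᴴ * Y) = Yᴴ * Y) :
    Yᴴ * Y * Gᴴ * (Yᴴ * Y) = Yᴴ * Y := by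
  simpa [conjTranspose_mul, Matrix.mul_assoc] using congrArg conjTranspose h

variable [PartialOrder R] [StarOrderedRing R] [NoZeroDivisors R]

lemma hatMatrix_mul_self (h : Yᴴ * Y * G * (Yᴴ * Y) = Yᴴ * Y) : hatMatrix Y G * Y = Y := by
  have h0 : Yᴴ * Y * (G * (Yᴴ * Y) - 1) = 0 := by
    rw [Matrix.mul_sub, ← Matrix.mul_assoc, h, Matrix.mul_one, sub_self]
  have h1 : Y * (G * (Yᴴ * Y)) - Y = 0 := by
    simpa only [Matrix.mul_sub, Matrix.mul_one] using (conjTranspose_mul_self_mul_eq_zero Y _).1 h0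
  simpa only [hatMatrix, Matrix.mul_assoc] using sub_eq_zero.1 h1

lemma conjTranspose_mul_hatMatrix (h : Yᴴ * Y * G * (Yᴴ * Y) = Yᴴ * Y) :
    Yᴴ * hatMatrix Y G = Yᴴ := by
  simpa only [conjTranspose_mul, conjTranspose_hatMatrix, conjTranspose_conjTranspose]
    using congrArg conjTranspose (hatMatrix_mul_self (gram_mul_conjTranspose_mul_gram h))

lemma hatMatrix_eq_of_ginv (h : Yᴴ * Y * G * (Yᴴ * Y) = Yᴴ * Y)
    (h' : Yᴴ * Y * G' * (Yᴴ * Y) = Yᴴ * Y) : hatMatrix Y G = hatMatrix Y G' :=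
  calc hatMatrix Y G = Y * G * (Yᴴ * hatMatrix Y G') := by
        rw [conjTranspose_mul_hatMatrix h', hatMatrix]
    _ = hatMatrix Y G * Y * G' * Yᴴ := by simp only [hatMatrix, Matrix.mul_assoc]
    _ = hatMatrix Y G' := by rw [hatMatrix_mul_self h, hatMatrix]

lemma isStarProjection_hatMatrix (h : Yᴴ * Y * G * (Yᴴ * Y) = Yᴴ * Y) :
    IsStarProjection (hatMatrix Y G) where
  isIdempotentElem := by
    change hatMatrix Y G * (Y * G * Yᴴ) = Y * G * Yᴴ
    rw [← Matrix.mul_assoc, ← Matrix.mul_assoc, hatMatrix_mul_self h]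
  isSelfAdjoint := by
    rw [IsSelfAdjoint, star_eq_conjTranspose, conjTranspose_hatMatrix,
      hatMatrix_eq_of_ginv (gram_mul_conjTranspose_mul_gram h) h]

-- Completing the square: the difference is the Gram matrix of `P X + Y Z`, `P` the hat matrix.
lemma posSemidef_gram_add_mul_sub_schur [Finite l] (h : Yᴴ * Y * G * (Yᴴ * Y) = Yᴴ * Y)
    (X : Matrix m l R) (Z : Matrix k l R) :
    ((X + Y * Z)ᴴ * (X + Y * Z) - (Xᴴ * X - Xᴴ * Y * G * (Xᴴ * Y)ᴴ)).PosSemidef := by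
  set P := hatMatrix Y G with hP
  have hPY : P * Y = Y := hatMatrix_mul_self h
  have hYP : Yᴴ * P = Yᴴ := conjTranspose_mul_hatMatrix h
  have hPP : P * P = P := (isStarProjection_hatMatrix h).isIdempotentElem
  have hPH : Pᴴ = P := (isStarProjection_hatMatrix h).isSelfAdjoint
  have hschur : Xᴴ * Y * G * (Xᴴ * Y)ᴴ = Xᴴ * P * X := by
    simp only [hP, hatMatrix, conjTranspose_mul, conjTranspose_conjTranspose, Matrix.mul_assoc]
  have hsq : (P * X + Y * Z)ᴴ * (P * X + Y * Z) =
      Xᴴ * (P * P) * X + Xᴴ * (P * Y) * Z + Zᴴ * (Yᴴ * P) * X + Zᴴ * Yᴴ * Y * Z := by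
    simp only [conjTranspose_add, conjTranspose_mul, hPH, Matrix.add_mul, Matrix.mul_add,
      Matrix.mul_assoc]
    abel
  convert posSemidef_conjTranspose_mul_self (P * X + Y * Z) using 1
  rw [hsq, hPP, hPY, hYP, hschur]
  simp only [conjTranspose_add, conjTranspose_mul, Matrix.add_mul, Matrix.mul_add,
    Matrix.mul_assoc]
  abel

end GeneralizedInverse

section QuadraticForms

lemma trace_transpose_mul_mul_add_smul {m k R : Type*} [Fintype m] [Fintype k] [CommRing R]
    {Q : Matrix m m R} (hQ : Q.IsSymm) (M N : Matrix m k R) (x : R) :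
    ((M + x • N)ᵀ * Q * (M + x • N)).trace =
      (Mᵀ * Q * M).trace + 2 * (Mᵀ * Q * N).trace * x + (Nᵀ * Q * N).trace * x ^ 2 := by
  have hcross : (Nᵀ * Q * M).trace = (Mᵀ * Q * N).trace := by
    rw [← trace_transpose]
    simp only [transpose_mul, transpose_transpose, hQ.eq, Matrix.mul_assoc]
  simp only [transpose_add, transpose_smul, Matrix.add_mul, Matrix.mul_add, Matrix.smul_mul,
    Matrix.mul_smul, trace_add, trace_smul, smul_eq_mul, hcross]
  ring

lemma sum_smul_transpose_sub_mul_mul_sub {σ m k R : Type*} [Fintype σ] [Fintype m]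
    [CommRing R] {w : σ → R} (hw : ∑ s, w s = 1) (Q : Matrix m m R) (X Z : σ → Matrix m k R) :
    ∑ s, w s • ((X s - ∑ r, w r • X r)ᵀ * Q * (Z s - ∑ r, w r • Z r)) =
      ∑ s, w s • ((X s)ᵀ * Q * Z s) - (∑ s, w s • X s)ᵀ * Q * ∑ s, w s • Z s := by
  set M := ∑ s, w s • X s with hM
  set N := ∑ s, w s • Z s with hN
  have hleft : ∑ s, w s • ((X s)ᵀ * Q * N) = Mᵀ * Q * N := by
    simp only [hM, transpose_sum, transpose_smul, Matrix.sum_mul, Matrix.smul_mul]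
  have hright : ∑ s, w s • (Mᵀ * Q * Z s) = Mᵀ * Q * N := by
    simp only [hN, Matrix.mul_sum, Matrix.mul_smul]
  have hconst : ∑ s, w s • (Mᵀ * Q * N) = Mᵀ * Q * N := by
    rw [← Finset.sum_smul, hw, one_smul]
  simp only [transpose_sub, Matrix.sub_mul, Matrix.mul_sub, smul_sub, Finset.sum_sub_distrib,
    hleft, hright, hconst]
  abel

open scoped ComplexOrder in
lemma exists_gram_eq_sum_conjTranspose_mul_mul {ι σ m k 𝕜 : Type*} [Fintype σ] [Fintype m]
    [RCLike 𝕜] {Q : σ → Matrix m m 𝕜} (hQ : ∀ s, (Q s).PosSemidef)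
    (D : ι → σ → Matrix m k 𝕜) :
    ∃ Y : ι → Matrix (σ × m) k 𝕜, ∀ i j, ∑ s, (D i s)ᴴ * Q s * D j s = (Y i)ᴴ * Y j := by
  have hroot : ∀ s, ∃ L : Matrix m m 𝕜, Q s = Lᴴ * L := fun s => by
    open scoped MatrixOrder in
    exact CStarAlgebra.nonneg_iff_eq_star_mul_self.1 (hQ s).nonneg
  choose L hL using hroot
  refine ⟨fun i => Matrix.of fun sk b => (L sk.1 * D i sk.1) sk.2 b, fun i j => ?_⟩
  ext a b
  have hblock : ∀ s, (D i s)ᴴ * Q s * D j s = (L s * D i s)ᴴ * (L s * D j s) := fun s => by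
    rw [hL, conjTranspose_mul]
    simp only [Matrix.mul_assoc]
  simp only [hblock, Matrix.sum_apply, Matrix.mul_apply (M := (_ * _)ᴴ), conjTranspose_apply]
  rw [Matrix.mul_apply, Fintype.sum_prod_type]
  rfl

end QuadraticForms

section PermutationInvariance

lemma exists_eq_smul_one_add_smul_of_forall_submatrix_perm {ι R : Type*} [DecidableEq ι]
    [Nontrivial ι] [Ring R] {M : Matrix ι ι R}
    (hM : ∀ σ : Equiv.Perm ι, M.submatrix σ σ = M) :
    ∃ a b : R, M = a • (1 : Matrix ι ι R) + b • Matrix.of fun _ _ => 1 := by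
  obtain ⟨i₀, j₀, h₀⟩ := exists_pair_ne ι
  have happ (σ : Equiv.Perm ι) (i j : ι) : M (σ i) (σ j) = M i j := congrFun₂ (hM σ) i j
  have hdiag (i : ι) : M i i = M i₀ i₀ := by
    simpa only [Equiv.swap_apply_left] using happ (Equiv.swap i₀ i) i₀ i₀
  have hoff {i j : ι} (hij : i ≠ j) : M i j = M i₀ j₀ := by
    obtain ⟨σ, hi, hj⟩ := MulAction.is_two_pretransitive_iff.1
      (Equiv.Perm.isMultiplyPretransitive ι 2) h₀ hij
    rw [← hi, ← hj]
    exact happ σ i₀ j₀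
  refine ⟨M i₀ i₀ - M i₀ j₀, M i₀ j₀, ?_⟩
  ext i j
  obtain rfl | hij := eq_or_ne i j
  · simp [hdiag i]
  · simp [hoff hij, hij]

lemma trace_submatrix_equiv {m n R : Type*} [Fintype m] [Fintype n] [AddCommMonoid R]
    (M : Matrix m m R) (e : n ≃ m) : (M.submatrix e e).trace = M.trace :=
  Equiv.sum_comp e fun i => M i i

end PermutationInvariance

section Centering

variable {t : ℕ}

lemma Bmat_isSymm (t : ℕ) : (Bmat t).IsSymm := by
  ext i j
  simp [Bmat, Jmat, one_apply, eq_comm]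

lemma Jmat_mul_Bmat (t : ℕ) : Jmat t * Bmat t = 0 := by
  obtain rfl | ht := eq_or_ne t 0
  · exact Subsingleton.elim _ _
  · ext i j
    simp [Bmat, Jmat, mul_apply, one_apply, ht]

lemma Bmat_mul_Bmat (t : ℕ) : Bmat t * Bmat t = Bmat t := by
  nth_rw 1 [Bmat]
  rw [Matrix.sub_mul, Matrix.one_mul, Matrix.smul_mul, Jmat_mul_Bmat, smul_zero, sub_zero]

lemma trace_Bmat (ht : t ≠ 0) : (Bmat t).trace = (t : ℝ) - 1 := by
  simp [Bmat, Jmat, Matrix.trace, ht]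

lemma submatrix_Bmat (σ : Equiv.Perm (Fin t)) : (Bmat t).submatrix σ σ = Bmat t := by
  ext i j
  simp [Bmat, Jmat, one_apply]

lemma mul_Bmat_eq_zero_of_forall_submatrix_perm {m : Type*} {N : Matrix m (Fin t) ℝ}
    (hN : ∀ σ : Equiv.Perm (Fin t), N.submatrix id σ = N) : N * Bmat t = 0 := by
  ext k i
  have hconst (j : Fin t) : N k j = N k i := by
    simpa using congrFun₂ (hN (Equiv.swap i j)) k i
  calc (N * Bmat t) k i = N k i * (Jmat t * Bmat t) i i := by
        simp only [mul_apply, hconst, Jmat, of_apply, one_mul, Finset.mul_sum]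
    _ = 0 := by rw [Jmat_mul_Bmat, Matrix.zero_apply, mul_zero]

lemma eq_smul_Bmat_of_forall_submatrix_perm (ht : 1 < t) {M : Matrix (Fin t) (Fin t) ℝ}
    (hM : ∀ σ : Equiv.Perm (Fin t), M.submatrix σ σ = M) (hMB : M * Bmat t = M) :
    M = (M.trace / ((t : ℝ) - 1)) • Bmat t := by
  have : Nontrivial (Fin t) := Fin.nontrivial_iff_two_le.2 ht
  have ht1 : (t : ℝ) - 1 ≠ 0 := sub_ne_zero.2 (by exact_mod_cast ht.ne')
  obtain ⟨a, b, hab⟩ := exists_eq_smul_one_add_smul_of_forall_submatrix_perm hM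
  have haB : M = a • Bmat t := by
    rw [← hMB, hab, ← Jmat, Matrix.add_mul, Matrix.smul_mul, Matrix.smul_mul, Matrix.one_mul,
      Jmat_mul_Bmat, smul_zero, add_zero]
  rw [haB, trace_smul, trace_Bmat (by omega), smul_eq_mul, mul_div_cancel_right₀ _ ht1]

lemma Jmat_mul_mul_Jmat {m : ℕ} (V : Matrix (Fin m) (Fin m) ℝ) :
    Jmat m * V * Jmat m = ((fun _ => (1 : ℝ)) ⬝ᵥ (V *ᵥ fun _ => (1 : ℝ))) • Jmat m := by
  ext i j
  simp only [Jmat, mul_apply, dotProduct, mulVec, of_apply, Matrix.smul_apply, smul_eq_mul,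
    one_mul, mul_one]
  exact Finset.sum_comm

-- `B̃ = Kᴴ Σ⁻¹ K` for the oblique projection `K = I - J Σ⁻¹ / (1' Σ⁻¹ 1)`.
lemma posSemidef_Btil {p : ℕ} {S : Matrix (Fin p) (Fin p) ℝ} (hS : S.PosSemidef) :
    (Btil S).PosSemidef := by
  set V := S⁻¹
  set c := (fun _ => (1 : ℝ)) ⬝ᵥ (V *ᵥ fun _ => (1 : ℝ))
  have hVpos : V.PosSemidef := hS.inv
  have hUH : (Jmat p * V)ᴴ = V * Jmat p := by
    have hJ : (Jmat p)ᴴ = Jmat p := by ext; simp [Jmat]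
    rw [conjTranspose_mul, hVpos.isHermitian.eq, hJ]
  have hUVU : V * Jmat p * V * Jmat p * V = c • (V * Jmat p * V) :=
    calc V * Jmat p * V * Jmat p * V = V * (Jmat p * V * Jmat p) * V := by
          simp only [Matrix.mul_assoc]
      _ = c • (V * Jmat p * V) := by rw [Jmat_mul_mul_Jmat, Matrix.mul_smul, Matrix.smul_mul]
  have hcc : c⁻¹ * (c⁻¹ * c) = c⁻¹ := by
    rw [mul_comm]
    simpa only [inv_inv] using mul_inv_mul_cancel c⁻¹
  have hBtil : Btil S = (1 - c⁻¹ • (Jmat p * V))ᴴ * V * (1 - c⁻¹ • (Jmat p * V)) := by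
    simp only [conjTranspose_sub, conjTranspose_one, conjTranspose_smul, hUH, star_trivial,
      Matrix.sub_mul, Matrix.mul_sub, Matrix.one_mul, Matrix.mul_one, Matrix.smul_mul,
      Matrix.mul_smul, hUVU, ← Matrix.mul_assoc, smul_sub, smul_smul, hcc]
    rw [Btil, sub_self, sub_zero]
  rw [hBtil]
  exact hVpos.conjTranspose_mul_mul_same _

end Centering

section Minimax

variable {ι E : Type*} [Fintype ι] [AddCommGroup E] [Module ℝ E]

lemma convexOn_sum_mul {s : Set E} (hs : Convex ℝ s) {f : ι → E → ℝ}
    (hf : ∀ i, ConvexOn ℝ s (f i)) {w : ι → ℝ} (hw : ∀ i, 0 ≤ w i) :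
    ConvexOn ℝ s fun x => ∑ i, w i * f i x := by
  refine ⟨hs, fun x hx y hy a b ha hb hab => ?_⟩
  calc ∑ i, w i * f i (a • x + b • y) ≤ ∑ i, w i * (a * f i x + b * f i y) := by
        gcongr with i
        exacts [hw i, (hf i).2 hx hy ha hb hab]
    _ = a • (∑ i, w i * f i x) + b • ∑ i, w i * f i y := by
        simp only [smul_eq_mul, Finset.mul_sum, mul_add, Finset.sum_add_distrib, mul_left_comm]

variable [TopologicalSpace E] [IsTopologicalAddGroup E] [ContinuousSMul ℝ E]

theorem exists_mem_stdSimplex_forall_le_sum {s : Set E} (hs : Convex ℝ s) (hne : s.Nonempty)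
    {f : ι → E → ℝ} (hf : ∀ i, ConvexOn ℝ s (f i)) (hcont : ∀ i, ContinuousOn (f i) s) {c : ℝ}
    (hc : ∀ x ∈ s, ∃ i, c ≤ f i x) :
    ∃ w ∈ stdSimplex ℝ ι, ∀ x ∈ s, c ≤ ∑ i, w i * f i x := by
  obtain ⟨x₀, hx₀⟩ := hne
  obtain ⟨i₀, -⟩ := hc x₀ hx₀
  by_contra! hlt
  have hcontw (x : E) : Continuous fun w : ι → ℝ => ∑ i, w i * f i x := by fun_prop
  have hconvw (x : E) : QuasiconvexOn ℝ (stdSimplex ℝ ι) fun w => -∑ i, w i * f i x :=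
    ((Fintype.linearCombination ℝ fun i => f i x).concaveOn
      (convex_stdSimplex ℝ ι)).neg.quasiconvexOn
  have hcompact : IsCompact (stdSimplex ℝ ι) := isCompact_stdSimplex ℝ ι
  obtain ⟨F, hFs, hF, hcover⟩ := hcompact.elim_finite_subcover_image
    (b := s) (c := fun x => {w | ∑ i, w i * f i x < c})
    (fun x _ => isOpen_lt (hcontw x) continuous_const) fun w hw => by simpa using hlt w hw
  -- Sion's minimax theorem: a single `x` does the work of the finitely many points of `F`.
  obtain ⟨x, hx, hxc⟩ := Sion.exists_lt_iInf_of_lt_iInf_of_finite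
    (f := fun w x => -∑ i, w i * f i x) (t := -c) ⟨_, single_mem_stdSimplex ℝ i₀⟩ hcompact
    (fun x _ => (hcontw x).neg.lowerSemicontinuous.lowerSemicontinuousOn _)
    (fun x _ => hconvw x) hs
    (fun w _ => ContinuousOn.upperSemicontinuousOn (by fun_prop))
    (fun w hw => (convexOn_sum_mul hs hf hw.1).neg.quasiconcaveOn)
    (convex_stdSimplex ℝ ι) hF hFs (fun w hw => by simpa using hcover hw)
  obtain ⟨i, hi⟩ := hc x hx
  simpa [Pi.single_apply, hi.not_gt] using hxc _ (single_mem_stdSimplex ℝ i)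

end Minimax

section InformationMatrices

variable {p t n : ℕ} {S : Matrix (Fin p) (Fin p) ℝ} {l0 : ℝ} {w : TrtSeq p t → ℝ}
  {G G' : Matrix (Fin t) (Fin t) ℝ}

/-- The incidence matrix `H_i(s) B_t` of a sequence, with the average over treatments subtracted
from each row. -/
def centredIncidence (l0 : ℝ) (i : Fin 2) (s : TrtSeq p t) : Matrix (Fin p) (Fin t) ℝ :=
  Hmat l0 i s * Bmat t

/-- The average `∑_s p_s H_i(s) B_t` of the centred incidence matrices over a design, whose
quadratic form is what `A_d` loses against `Â_d`. -/
def meanIncidence (l0 : ℝ) (w : TrtSeq p t → ℝ) (i : Fin 2) : Matrix (Fin p) (Fin t) ℝ :=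
  ∑ s, w s • centredIncidence l0 i s

lemma centredIncidence_mul_Bmat (i : Fin 2) (s : TrtSeq p t) :
    centredIncidence l0 i s * Bmat t = centredIncidence l0 i s := by
  rw [centredIncidence, Matrix.mul_assoc, Bmat_mul_Bmat]

lemma meanIncidence_mul_Bmat (i : Fin 2) :
    meanIncidence l0 w i * Bmat t = meanIncidence l0 w i := by
  simp only [meanIncidence, Matrix.sum_mul, Matrix.smul_mul, centredIncidence_mul_Bmat]

lemma Ahat_eq (S : Matrix (Fin p) (Fin p) ℝ) (l0 : ℝ) (s : TrtSeq p t) (i j : Fin 2) :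
    Ahat S l0 s i j = (centredIncidence l0 i s)ᵀ * Btil S * centredIncidence l0 j s := by
  simp only [Ahat, centredIncidence, transpose_mul, (Bmat_isSymm t).eq, Matrix.mul_assoc]

lemma AD_eq (i j : Fin 2) :
    AD n S l0 w i j = (n : ℝ) • (∑ s, w s • Ahat S l0 s i j -
      (meanIncidence l0 w i)ᵀ * Btil S * meanIncidence l0 w j) :=
  (smul_sub _ _ _).symm

lemma isSymm_Btil (hS : S.PosSemidef) : (Btil S).IsSymm := by
  simpa using (posSemidef_Btil hS).isHermitian

lemma transpose_AD (hS : S.PosSemidef) (i j : Fin 2) : (AD n S l0 w i j)ᵀ = AD n S l0 w j i := by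
  simp only [AD_eq, Ahat_eq, transpose_smul, transpose_sub, transpose_sum, transpose_mul,
    transpose_transpose, (isSymm_Btil hS).eq, Matrix.mul_assoc]

lemma AD_mul_Bmat (i j : Fin 2) : AD n S l0 w i j * Bmat t = AD n S l0 w i j := by
  simp only [AD_eq, Ahat_eq, Matrix.smul_mul, Matrix.sub_mul, Matrix.sum_mul, Matrix.mul_assoc,
    centredIncidence_mul_Bmat, meanIncidence_mul_Bmat]

lemma ADfun_mul_Bmat (hS : S.PosSemidef) : ADfun n S l0 w G * Bmat t = ADfun n S l0 w G := by
  rw [ADfun, transpose_AD hS, Matrix.sub_mul, Matrix.mul_assoc (_ * G), AD_mul_Bmat, AD_mul_Bmat]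

lemma exists_gram_eq_AD (hS : S.PosSemidef) (hw : IsDesign w) (n : ℕ) (l0 : ℝ) :
    ∃ Y : Fin 2 → Matrix (TrtSeq p t × Fin p) (Fin t) ℝ,
      ∀ i j, AD n S l0 w i j = (Y i)ᴴ * Y j := by
  have hQ (s : TrtSeq p t) : ((n * w s) • Btil S).PosSemidef :=
    (posSemidef_Btil hS).smul (mul_nonneg n.cast_nonneg (hw.1 s))
  obtain ⟨Y, hY⟩ := exists_gram_eq_sum_conjTranspose_mul_mul hQ
    fun i s => centredIncidence l0 i s - meanIncidence l0 w i
  refine ⟨Y, fun i j => ?_⟩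
  have hcov : ∑ s, w s • ((centredIncidence l0 i s - meanIncidence l0 w i)ᵀ * Btil S *
      (centredIncidence l0 j s - meanIncidence l0 w j)) = ∑ s, w s • Ahat S l0 s i j -
        (meanIncidence l0 w i)ᵀ * Btil S * meanIncidence l0 w j := by
    simp only [Ahat_eq]
    exact sum_smul_transpose_sub_mul_mul_sub hw.2 _ _ _
  rw [← hY, AD_eq, ← hcov, Finset.smul_sum]
  simp only [conjTranspose_eq_transpose_of_trivial, Matrix.mul_smul, Matrix.smul_mul, smul_smul]

lemma ADfun_eq_of_isGInv (hS : S.PosSemidef) (hw : IsDesign w)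
    (hG : IsGInv (AD n S l0 w 1 1) G) (hG' : IsGInv (AD n S l0 w 1 1) G') :
    ADfun n S l0 w G = ADfun n S l0 w G' := by
  obtain ⟨Y, hY⟩ := exists_gram_eq_AD hS hw n l0
  rw [hY] at hG hG'
  have hschur (K : Matrix (Fin t) (Fin t) ℝ) :
      ADfun n S l0 w K = (Y 0)ᴴ * Y 0 - (Y 0)ᴴ * hatMatrix (Y 1) K * Y 0 := by
    rw [ADfun, transpose_AD hS, hY, hY, hY, hatMatrix]
    simp only [Matrix.mul_assoc]
  rw [hschur, hschur, hatMatrix_eq_of_ginv hG hG']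

/-- The quadratic `tr A_{d11} + 2 x tr A_{d12} + x² tr A_{d22}`, the analogue for a design of
the quadratics `r_s(x)` of single sequences. -/
def traceQuad (n : ℕ) (S : Matrix (Fin p) (Fin p) ℝ) (l0 : ℝ) (w : TrtSeq p t → ℝ) (x : ℝ) : ℝ :=
  (AD n S l0 w 0 0).trace + 2 * (AD n S l0 w 0 1).trace * x + (AD n S l0 w 1 1).trace * x ^ 2

lemma trace_ADfun_le_traceQuad (hS : S.PosSemidef) (hw : IsDesign w)
    (hG : IsGInv (AD n S l0 w 1 1) G) (x : ℝ) :
    (ADfun n S l0 w G).trace ≤ traceQuad n S l0 w x := by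
  obtain ⟨Y, hY⟩ := exists_gram_eq_AD hS hw n l0
  have hG' : (Y 1)ᴴ * Y 1 * G * ((Y 1)ᴴ * Y 1) = (Y 1)ᴴ * Y 1 := by rwa [hY] at hG
  have hquad : ((Y 0 + x • Y 1)ᴴ * (Y 0 + x • Y 1)).trace = traceQuad n S l0 w x := by
    simpa [traceQuad, hY] using trace_transpose_mul_mul_add_smul isSymm_one (Y 0) (Y 1) x
  have hpos := (posSemidef_gram_add_mul_sub_schur hG' (Y 0) (x • 1)).trace_nonneg
  rw [Matrix.mul_smul, Matrix.mul_one, trace_sub, hquad, sub_nonneg] at hpos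
  simpa [ADfun, hY] using hpos

lemma rSeq_eq_trace (hS : S.PosSemidef) (s : TrtSeq p t) (x : ℝ) :
    rSeq S l0 s x = ((centredIncidence l0 0 s + x • centredIncidence l0 1 s)ᵀ * Btil S *
      (centredIncidence l0 0 s + x • centredIncidence l0 1 s)).trace := by
  rw [trace_transpose_mul_mul_add_smul (isSymm_Btil hS)]
  simp only [rSeq, hseq, Ahat_eq]

lemma trace_transpose_mul_Btil_mul_nonneg (hS : S.PosSemidef) (M : Matrix (Fin p) (Fin t) ℝ) :
    0 ≤ (Mᵀ * Btil S * M).trace := by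
  simpa using ((posSemidef_Btil hS).conjTranspose_mul_mul_same M).trace_nonneg

lemma rSeq_nonneg (hS : S.PosSemidef) (s : TrtSeq p t) (x : ℝ) : 0 ≤ rSeq S l0 s x := by
  rw [rSeq_eq_trace hS]
  exact trace_transpose_mul_Btil_mul_nonneg hS _

lemma traceQuad_eq (hS : S.PosSemidef) (x : ℝ) :
    traceQuad n S l0 w x = n * (∑ s, w s * rSeq S l0 s x -
      ((meanIncidence l0 w 0 + x • meanIncidence l0 w 1)ᵀ * Btil S *
        (meanIncidence l0 w 0 + x • meanIncidence l0 w 1)).trace) := by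
  have htrace (i j : Fin 2) : (AD n S l0 w i j).trace = n * (∑ s, w s * hseq S l0 s i j -
      ((meanIncidence l0 w i)ᵀ * Btil S * meanIncidence l0 w j).trace) := by
    simp only [AD_eq, trace_smul, trace_sub, trace_sum, smul_eq_mul, hseq]
  have hsum : ∑ s, w s * rSeq S l0 s x = ∑ s, w s * hseq S l0 s 0 0 +
      2 * (∑ s, w s * hseq S l0 s 0 1) * x + (∑ s, w s * hseq S l0 s 1 1) * x ^ 2 := by
    simp only [rSeq, mul_add, Finset.sum_add_distrib, Finset.mul_sum, Finset.sum_mul, mul_assoc,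
      mul_left_comm]
  rw [trace_transpose_mul_mul_add_smul (isSymm_Btil hS), hsum, traceQuad, htrace, htrace, htrace]
  ring

lemma traceQuad_le (hS : S.PosSemidef) (x : ℝ) :
    traceQuad n S l0 w x ≤ n * ∑ s, w s * rSeq S l0 s x := by
  rw [traceQuad_eq hS]
  exact mul_le_mul_of_nonneg_left
    (sub_le_self _ (trace_transpose_mul_Btil_mul_nonneg hS _)) n.cast_nonneg

lemma rSeq_le_rMax (s : TrtSeq p t) (x : ℝ) : rSeq S l0 s x ≤ rMax p t S l0 x :=
  le_csSup (Set.finite_range _).bddAbove ⟨s, rfl⟩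

theorem trace_ADfun_le_mul_yZero (hS : S.PosSemidef) (hw : IsDesign w)
    (hG : IsGInv (AD n S l0 w 1 1) G) :
    (ADfun n S l0 w G).trace ≤ n * yZero p t S l0 := by
  rw [yZero, Real.mul_iInf_of_nonneg n.cast_nonneg]
  refine le_ciInf fun x => ?_
  calc (ADfun n S l0 w G).trace ≤ traceQuad n S l0 w x := trace_ADfun_le_traceQuad hS hw hG x
    _ ≤ n * ∑ s, w s * rSeq S l0 s x := traceQuad_le hS x
    _ ≤ n * ∑ s, w s * rMax p t S l0 x := by
        gcongr with s
        exacts [hw.1 s, rSeq_le_rMax s x]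
    _ = n * rMax p t S l0 x := by rw [← Finset.sum_mul, hw.2, one_mul]

end InformationMatrices

section SymmetricDesigns

variable {p t n : ℕ} {S : Matrix (Fin p) (Fin p) ℝ} {l0 : ℝ} {w : TrtSeq p t → ℝ}

lemma sum_permSeq {M : Type*} [AddCommMonoid M] (σ : Equiv.Perm (Fin t)) (f : TrtSeq p t → M) :
    ∑ s, f (permSeq σ s) = ∑ s, f s :=
  Equiv.sum_comp (Equiv.piCongrRight fun _ => σ) f

lemma submatrix_centredIncidence_permSeq (l0 : ℝ) (i : Fin 2) (σ : Equiv.Perm (Fin t))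
    (s : TrtSeq p t) :
    (centredIncidence l0 i (permSeq σ s)).submatrix id σ = centredIncidence l0 i s := by
  have hH : (Hmat l0 i (permSeq σ s)).submatrix id σ = Hmat l0 i s := by
    ext k j
    unfold Hmat
    split_ifs <;> simp [Tmat, Fmat, permSeq]
  rw [centredIncidence, ← submatrix_mul_equiv _ _ _ σ, hH, submatrix_Bmat, centredIncidence]

lemma submatrix_Ahat_permSeq (S : Matrix (Fin p) (Fin p) ℝ) (l0 : ℝ) (σ : Equiv.Perm (Fin t))
    (s : TrtSeq p t) (i j : Fin 2) :
    (Ahat S l0 (permSeq σ s) i j).submatrix σ σ = Ahat S l0 s i j := by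
  rw [Ahat_eq, Ahat_eq, ← submatrix_centredIncidence_permSeq l0 i σ s,
    ← submatrix_centredIncidence_permSeq l0 j σ s]
  rfl

lemma rSeq_permSeq (σ : Equiv.Perm (Fin t)) (s : TrtSeq p t) (x : ℝ) :
    rSeq S l0 (permSeq σ s) x = rSeq S l0 s x := by
  have hh (i j : Fin 2) : hseq S l0 (permSeq σ s) i j = hseq S l0 s i j := by
    rw [hseq, hseq, ← submatrix_Ahat_permSeq S l0 σ s, trace_submatrix_equiv]
  simp only [rSeq, hh]

lemma sum_symmetrize_mul (w : TrtSeq p t → ℝ) {f : TrtSeq p t → ℝ}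
    (hf : ∀ (σ : Equiv.Perm (Fin t)) s, f (permSeq σ s) = f s) :
    ∑ s, symmetrize w s * f s = ∑ s, w s * f s := by
  have hperm (σ : Equiv.Perm (Fin t)) : ∑ s, permDesign σ w s * f s = ∑ s, w s * f s := by
    rw [← sum_permSeq σ⁻¹ fun s => w s * f s]
    simp only [hf, permDesign]
  simp only [symmetrize, mul_assoc, ← Finset.mul_sum, Finset.sum_mul]
  rw [Finset.sum_comm]
  simp only [hperm, Finset.sum_const, Finset.card_univ, Fintype.card_perm, Fintype.card_fin,
    nsmul_eq_mul]
  rw [inv_mul_cancel_left₀ (by positivity)]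

lemma IsDesign.symmetrize (hw : IsDesign w) : IsDesign (symmetrize w) := by
  refine ⟨fun s => mul_nonneg (by positivity) (Finset.sum_nonneg fun σ _ => hw.1 _), ?_⟩
  simpa [hw.2] using sum_symmetrize_mul w (f := fun _ => 1) fun _ _ => rfl

lemma isSymmetricDesign_symmetrize (w : TrtSeq p t → ℝ) : IsSymmetricDesign (symmetrize w) := by
  intro σ s
  rw [symmetrize, symmetrize, ← Equiv.sum_comp (Equiv.mulLeft σ)]
  congr! 2 with τ
  simp only [permDesign]
  congr 1
  funext k
  simp [permSeq]

lemma IsSymmetricDesign.meanIncidence_eq_zero (hw : IsSymmetricDesign w) (i : Fin 2) :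
    meanIncidence l0 w i = 0 := by
  rw [← meanIncidence_mul_Bmat]
  refine mul_Bmat_eq_zero_of_forall_submatrix_perm fun σ => ?_
  calc (meanIncidence l0 w i).submatrix id σ
      = ∑ s, w s • (centredIncidence l0 i s).submatrix id σ := by
        ext; simp [meanIncidence, Matrix.sum_apply]
    _ = meanIncidence l0 w i := by
        rw [← sum_permSeq σ, meanIncidence]
        simp only [hw σ, submatrix_centredIncidence_permSeq]

lemma IsSymmetricDesign.AD_eq_smul_Bmat (hw : IsSymmetricDesign w) (ht : 1 < t) (i j : Fin 2) :
    AD n S l0 w i j = ((AD n S l0 w i j).trace / ((t : ℝ) - 1)) • Bmat t := by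
  refine eq_smul_Bmat_of_forall_submatrix_perm ht (fun σ => ?_) (AD_mul_Bmat i j)
  simp only [AD_eq, hw.meanIncidence_eq_zero, Matrix.mul_zero, sub_zero]
  calc ((n : ℝ) • ∑ s, w s • Ahat S l0 s i j).submatrix σ σ
      = (n : ℝ) • ∑ s, w s • (Ahat S l0 s i j).submatrix σ σ := by
        ext; simp [Matrix.sum_apply]
    _ = (n : ℝ) • ∑ s, w s • Ahat S l0 s i j := by
        rw [← sum_permSeq σ]
        simp only [hw σ, submatrix_Ahat_permSeq]

lemma IsSymmetricDesign.traceQuad_eq (hw : IsSymmetricDesign w) (hS : S.PosSemidef) (x : ℝ) :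
    traceQuad n S l0 w x = n * ∑ s, w s * rSeq S l0 s x := by
  simp [_root_.traceQuad_eq hS, hw.meanIncidence_eq_zero]

lemma IsSymmetricDesign.exists_trace_ADfun_eq_traceQuad (hw : IsSymmetricDesign w) (ht : 1 < t) :
    ∃ G, IsGInv (AD n S l0 w 1 1) G ∧ ∃ x, (ADfun n S l0 w G).trace = traceQuad n S l0 w x := by
  obtain ⟨c, hc⟩ : ∃ c : Fin 2 → Fin 2 → ℝ, ∀ i j, AD n S l0 w i j = c i j • Bmat t :=
    ⟨_, fun i j => hw.AD_eq_smul_Bmat ht i j⟩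
  -- For `c 1 1 = 0` the convention `x / 0 = 0` gives `G = 0` and `x = 0`, which also work.
  refine ⟨(c 1 1)⁻¹ • Bmat t, ?_, -c 0 1 / c 1 1, ?_⟩
  · simp only [IsGInv, hc, Matrix.smul_mul, Matrix.mul_smul, Bmat_mul_Bmat, smul_smul]
    rw [← mul_assoc, mul_inv_mul_cancel]
  · have hcomplete : c 0 0 - c 0 1 ^ 2 / c 1 1 =
        c 0 0 + 2 * c 0 1 * (-c 0 1 / c 1 1) + c 1 1 * (-c 0 1 / c 1 1) ^ 2 := by
      rcases eq_or_ne (c 1 1) 0 with h | h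
      · simp [h]
      · field_simp
        ring
    simp only [ADfun, traceQuad, hc, transpose_smul, (Bmat_isSymm t).eq, Matrix.smul_mul,
      Matrix.mul_smul, Bmat_mul_Bmat, smul_smul, trace_sub, trace_smul, smul_eq_mul]
    linear_combination (Bmat t).trace * hcomplete

lemma convexOn_rSeq (hS : S.PosSemidef) (s : TrtSeq p t) :
    ConvexOn ℝ Set.univ (rSeq S l0 s) := by
  have hlead : 0 ≤ hseq S l0 s 1 1 := by
    rw [hseq, Ahat_eq]
    exact trace_transpose_mul_Btil_mul_nonneg hS _
  have hlin : ConvexOn ℝ Set.univ fun x : ℝ => hseq S l0 s 0 0 + 2 * hseq S l0 s 0 1 * x :=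
    (convexOn_const _ convex_univ).add ((LinearMap.mulLeft ℝ _).convexOn convex_univ)
  exact hlin.add ((even_two.convexOn_pow (𝕜 := ℝ)).smul hlead)

lemma continuous_rSeq (s : TrtSeq p t) : Continuous (rSeq S l0 s) := by
  unfold rSeq
  fun_prop

lemma yZero_le_rMax (hS : S.PosSemidef) (x : ℝ) :
    yZero p t S l0 ≤ rMax p t S l0 x := by
  refine ciInf_le ⟨0, ?_⟩ x
  rintro _ ⟨x, rfl⟩
  exact Real.sSup_nonneg (by rintro _ ⟨s, rfl⟩; exact rSeq_nonneg hS s x)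

lemma exists_rSeq_eq_rMax (ht : t ≠ 0) (S : Matrix (Fin p) (Fin p) ℝ) (l0 x : ℝ) :
    ∃ s : TrtSeq p t, rSeq S l0 s x = rMax p t S l0 x := by
  have : NeZero t := ⟨ht⟩
  exact (Set.range_nonempty _).csSup_mem (Set.finite_range _)

theorem exists_isDesign_forall_yZero_le (hS : S.PosSemidef) (ht : t ≠ 0) (l0 : ℝ) :
    ∃ w : TrtSeq p t → ℝ, IsDesign w ∧ ∀ x, yZero p t S l0 ≤ ∑ s, w s * rSeq S l0 s x := by
  obtain ⟨w, hw, hle⟩ := exists_mem_stdSimplex_forall_le_sum convex_univ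
    Set.univ_nonempty (convexOn_rSeq (t := t) (l0 := l0) hS)
    (fun s => (continuous_rSeq s).continuousOn) (c := yZero p t S l0) fun x _ => by
      obtain ⟨s, hs⟩ := exists_rSeq_eq_rMax ht S l0 x
      exact ⟨s, hs ▸ yZero_le_rMax hS x⟩
  exact ⟨w, hw, fun x => hle x (Set.mem_univ x)⟩

theorem exists_isDesign_mul_yZero_le_trace_ADfun (hS : S.PosSemidef) (ht : 1 < t) (n : ℕ)
    (l0 : ℝ) :
    ∃ (w : TrtSeq p t → ℝ) (G : Matrix (Fin t) (Fin t) ℝ), IsDesign w ∧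
      IsGInv (AD n S l0 w 1 1) G ∧ n * yZero p t S l0 ≤ (ADfun n S l0 w G).trace := by
  obtain ⟨w, hw, hle⟩ := exists_isDesign_forall_yZero_le (p := p) hS (Nat.ne_zero_of_lt ht) l0
  have hsymm := isSymmetricDesign_symmetrize w
  obtain ⟨G, hG, x, hx⟩ := hsymm.exists_trace_ADfun_eq_traceQuad (n := n) (S := S) (l0 := l0) ht
  refine ⟨symmetrize w, G, hw.symmetrize, hG, ?_⟩
  rw [hx, hsymm.traceQuad_eq hS, sum_symmetrize_mul w fun σ s => rSeq_permSeq σ s x]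
  exact mul_le_mul_of_nonneg_left (hle x) n.cast_nonneg

end SymmetricDesigns

section SecondMoments

variable {t : ℕ} {g : Measure (Fin t → ℝ)}

/-- The matrix `∫ τ τ' g(dτ)` of second moments of a measure, through which the integral of every
quadratic form is expressed. -/
def secondMoment (g : Measure (Fin t → ℝ)) : Matrix (Fin t) (Fin t) ℝ :=
  Matrix.of fun i j => ∫ τ, τ i * τ j ∂g

lemma integrable_mul_apply (hmom : Integrable (fun τ : Fin t → ℝ => τ ⬝ᵥ τ) g) (i j : Fin t) :
    Integrable (fun τ : Fin t → ℝ => τ i * τ j) g := by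
  refine hmom.mono' (by fun_prop) (Filter.Eventually.of_forall fun τ => ?_)
  have hsq (i : Fin t) : |τ i| ^ 2 ≤ τ ⬝ᵥ τ := by
    rw [sq_abs, sq]
    exact Finset.single_le_sum (f := fun i => τ i * τ i) (fun _ _ => mul_self_nonneg _)
      (Finset.mem_univ i)
  rw [norm_mul, Real.norm_eq_abs, Real.norm_eq_abs]
  linarith [two_mul_le_add_sq |τ i| |τ j|, hsq i, hsq j]

lemma integral_dotProduct_mulVec (hmom : Integrable (fun τ : Fin t → ℝ => τ ⬝ᵥ τ) g)
    (A : Matrix (Fin t) (Fin t) ℝ) :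
    ∫ τ, τ ⬝ᵥ (A *ᵥ τ) ∂g = (A * secondMoment g).trace := by
  have hint (i j : Fin t) : Integrable (fun τ : Fin t → ℝ => A i j * (τ j * τ i)) g :=
    (integrable_mul_apply hmom j i).const_mul _
  calc ∫ τ, τ ⬝ᵥ (A *ᵥ τ) ∂g = ∫ τ, ∑ i, ∑ j, A i j * (τ j * τ i) ∂g := by
        simp only [dotProduct, mulVec, Finset.mul_sum, mul_left_comm, mul_comm]
    _ = ∑ i, ∑ j, A i j * ∫ τ, τ j * τ i ∂g := by
        rw [integral_finsetSum _ fun i _ => integrable_finsetSum _ fun j _ => hint i j]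
        refine Finset.sum_congr rfl fun i _ => ?_
        rw [integral_finsetSum _ fun j _ => hint i j]
        exact Finset.sum_congr rfl fun j _ => integral_const_mul _ _
    _ = (A * secondMoment g).trace := rfl

lemma trace_secondMoment (hmom : Integrable (fun τ : Fin t → ℝ => τ ⬝ᵥ τ) g) :
    (secondMoment g).trace = ∫ τ, τ ⬝ᵥ τ ∂g := by
  simpa using (integral_dotProduct_mulVec hmom 1).symm

lemma IsExchangeablePrior.ae_sum_eq_zero (hg : IsExchangeablePrior g) :
    ∀ᵐ τ ∂g, ∑ i, τ i = 0 :=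
  (ae_iff.2 hg.2.1 : ∀ᵐ τ ∂g, ∑ i, τ i = 0 ∧ τ ≠ 0).mono fun _ => And.left

lemma IsExchangeablePrior.ae_ne_zero (hg : IsExchangeablePrior g) : ∀ᵐ τ ∂g, τ ≠ 0 :=
  (ae_iff.2 hg.2.1 : ∀ᵐ τ ∂g, ∑ i, τ i = 0 ∧ τ ≠ 0).mono fun _ => And.right

lemma IsExchangeablePrior.one_lt (hg : IsExchangeablePrior g) : 1 < t := by
  have := hg.1
  obtain ⟨τ, hsum, hne⟩ := (hg.ae_sum_eq_zero.and hg.ae_ne_zero).exists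
  by_contra! ht
  have : Subsingleton (Fin t) := Fin.subsingleton_iff_le_one.2 ht
  exact hne (funext fun i => by rwa [Fintype.sum_subsingleton _ i] at hsum)

lemma IsExchangeablePrior.integral_dotProduct_self_pos (hg : IsExchangeablePrior g)
    (hmom : Integrable (fun τ : Fin t → ℝ => τ ⬝ᵥ τ) g) : 0 < ∫ τ, τ ⬝ᵥ τ ∂g := by
  have := hg.1
  have hnonneg (τ : Fin t → ℝ) : 0 ≤ τ ⬝ᵥ τ := by simpa using dotProduct_star_self_nonneg τ
  have hsupp : Function.support (fun τ : Fin t → ℝ => τ ⬝ᵥ τ) =ᵐ[g] Set.univ :=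
    Filter.eventuallyEq_univ.2 (hg.ae_ne_zero.mono fun τ hτ => mt dotProduct_self_eq_zero.1 hτ)
  rw [integral_pos_iff_support_of_nonneg hnonneg hmom, measure_congr hsupp, measure_univ]
  exact one_pos

lemma IsExchangeablePrior.submatrix_secondMoment (hg : IsExchangeablePrior g)
    (σ : Equiv.Perm (Fin t)) : (secondMoment g).submatrix σ σ = secondMoment g := by
  ext i j
  have hσ : Measurable fun (τ : Fin t → ℝ) i => τ (σ i) := by fun_prop
  calc ∫ τ, τ (σ i) * τ (σ j) ∂g = ∫ τ, τ i * τ j ∂(g.map fun τ i => τ (σ i)) := by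
        rw [integral_map hσ.aemeasurable (by fun_prop)]
    _ = ∫ τ, τ i * τ j ∂g := by rw [hg.2.2]

lemma IsExchangeablePrior.secondMoment_mul_Bmat (hg : IsExchangeablePrior g)
    (hmom : Integrable (fun τ : Fin t → ℝ => τ ⬝ᵥ τ) g) :
    secondMoment g * Bmat t = secondMoment g := by
  have hJ : secondMoment g * Jmat t = 0 := by
    ext i j
    simp only [Matrix.mul_apply, secondMoment, Jmat, of_apply, mul_one, Matrix.zero_apply]
    rw [← integral_finsetSum _ fun k _ => integrable_mul_apply hmom i k]
    refine integral_eq_zero_of_ae (hg.ae_sum_eq_zero.mono fun τ hτ => ?_)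
    simp only [← Finset.mul_sum, hτ, mul_zero, Pi.zero_apply]
  rw [Bmat, Matrix.mul_sub, Matrix.mul_smul, hJ, smul_zero, sub_zero, Matrix.mul_one]

theorem IsExchangeablePrior.integral_dotProduct_mulVec (hg : IsExchangeablePrior g)
    (hmom : Integrable (fun τ : Fin t → ℝ => τ ⬝ᵥ τ) g) {A : Matrix (Fin t) (Fin t) ℝ}
    (hA : A * Bmat t = A) :
    ∫ τ, τ ⬝ᵥ (A *ᵥ τ) ∂g = (∫ τ, τ ⬝ᵥ τ ∂g) * A.trace / ((t : ℝ) - 1) := by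
  rw [_root_.integral_dotProduct_mulVec hmom, eq_smul_Bmat_of_forall_submatrix_perm hg.one_lt
    hg.submatrix_secondMoment (hg.secondMoment_mul_Bmat hmom), trace_secondMoment hmom,
    Matrix.mul_smul, hA, trace_smul, smul_eq_mul, div_mul_eq_mul_div]

end SecondMoments

theorem stmt18_general (p t n : ℕ) (S : Matrix (Fin p) (Fin p) ℝ) (hS : S.PosDef) (l0 : ℝ)
    (g : Measure (Fin t → ℝ)) (hg : IsExchangeablePrior g)
    (hmom : Integrable (fun τ : Fin t → ℝ => τ ⬝ᵥ τ) g)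
    (w : TrtSeq p t → ℝ) (hw : IsDesign w)
    (G : Matrix (Fin t) (Fin t) ℝ) (hG : IsGInv (AD n S l0 w 1 1) G) :
    (∫ τ, τ ⬝ᵥ (ADfun n S l0 w G *ᵥ τ) ∂g =
      (∫ τ, τ ⬝ᵥ τ ∂g) * (ADfun n S l0 w G).trace / ((t : ℝ) - 1)) ∧
    (∀ G1 G2 : Matrix (Fin t) (Fin t) ℝ,
      IsGInv (AD n S l0 w 1 1) G1 → IsGInv (AD n S l0 w 1 1) G2 →
      ∫ τ, τ ⬝ᵥ (ADfun n S l0 w G1 *ᵥ τ) ∂g = ∫ τ, τ ⬝ᵥ (ADfun n S l0 w G2 *ᵥ τ) ∂g) ∧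
    ((∀ w' : TrtSeq p t → ℝ, IsDesign w' →
        ∀ G' : Matrix (Fin t) (Fin t) ℝ, IsGInv (AD n S l0 w' 1 1) G' →
        ∫ τ, τ ⬝ᵥ (ADfun n S l0 w' G' *ᵥ τ) ∂g ≤
          ∫ τ, τ ⬝ᵥ (ADfun n S l0 w G *ᵥ τ) ∂g) ↔
      (ADfun n S l0 w G).trace = (n : ℝ) * yZero p t S l0) := by
  have hpsd := hS.posSemidef
  have hpos : 0 < ∫ τ, τ ⬝ᵥ τ ∂g := hg.integral_dotProduct_self_pos hmom
  have ht : (0 : ℝ) < t - 1 := sub_pos.2 (Nat.one_lt_cast.2 hg.one_lt)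
  have hint (w') (G') : ∫ τ, τ ⬝ᵥ (ADfun n S l0 w' G' *ᵥ τ) ∂g =
      (∫ τ, τ ⬝ᵥ τ ∂g) * (ADfun n S l0 w' G').trace / ((t : ℝ) - 1) :=
    hg.integral_dotProduct_mulVec hmom (ADfun_mul_Bmat hpsd)
  refine ⟨hint w G, fun G₁ G₂ h₁ h₂ => by rw [ADfun_eq_of_isGInv hpsd hw h₁ h₂], ?_⟩
  simp only [hint, div_le_div_iff_of_pos_right ht, mul_le_mul_iff_right₀ hpos]
  constructor
  · intro hmax
    obtain ⟨w₀, G₀, hw₀, hG₀, hle⟩ := exists_isDesign_mul_yZero_le_trace_ADfun hpsd hg.one_lt n l0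
    exact (trace_ADfun_le_mul_yZero hpsd hw hG).antisymm (hle.trans (hmax w₀ hw₀ G₀ hG₀))
  · intro heq w' hw' G' hG'
    exact (trace_ADfun_le_mul_yZero hpsd hw' hG').trans_eq heq.symm

/-- the Bayes Fisher information for `λ` equals
`(∫ τ'τ dg) tr(A_d(G))/(t-1)`, is independent of the generalized inverse, and is
maximized exactly when `tr(A_d(G)) = n y_0`. -/
theorem stmt18 (p t n : ℕ) (hp : 2 ≤ p) (ht : 3 ≤ t) (hn : 1 ≤ n)
    (S : Matrix (Fin p) (Fin p) ℝ) (hS : S.PosDef) (l0 : ℝ)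
    (g : Measure (Fin t → ℝ)) (hg : IsExchangeablePrior g)
    (hmom : Integrable (fun τ : Fin t → ℝ => τ ⬝ᵥ τ) g)
    (hmompos : 0 < ∫ τ, τ ⬝ᵥ τ ∂g)
    (w : TrtSeq p t → ℝ) (hw : IsDesign w)
    (G : Matrix (Fin t) (Fin t) ℝ) (hG : IsGInv (AD n S l0 w 1 1) G) :
    (∫ τ, τ ⬝ᵥ (ADfun n S l0 w G *ᵥ τ) ∂g =
      (∫ τ, τ ⬝ᵥ τ ∂g) * (ADfun n S l0 w G).trace / ((t : ℝ) - 1)) ∧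
    (∀ G1 G2 : Matrix (Fin t) (Fin t) ℝ,
      IsGInv (AD n S l0 w 1 1) G1 → IsGInv (AD n S l0 w 1 1) G2 →
      ∫ τ, τ ⬝ᵥ (ADfun n S l0 w G1 *ᵥ τ) ∂g = ∫ τ, τ ⬝ᵥ (ADfun n S l0 w G2 *ᵥ τ) ∂g) ∧
    ((∀ w' : TrtSeq p t → ℝ, IsDesign w' →
        ∀ G' : Matrix (Fin t) (Fin t) ℝ, IsGInv (AD n S l0 w' 1 1) G' →
        ∫ τ, τ ⬝ᵥ (ADfun n S l0 w' G' *ᵥ τ) ∂g ≤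
          ∫ τ, τ ⬝ᵥ (ADfun n S l0 w G *ᵥ τ) ∂g) ↔
      (ADfun n S l0 w G).trace = (n : ℝ) * yZero p t S l0) := by
  exact stmt18_general p t n S hS l0 g hg hmom w hw G hG
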